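/- Let G be a chain graph with chain components 𝒯 and let ≺ be a strict total order of 𝒯 consistent with G, and let p be a strictly positive joint probability mass function. Then the following two families of conditions are equivalent: (I) for every T ∈ 𝒯, p_{A|pre(T)} = p_{A|pa_G(A)} for every connected subset A ⊆ T, and p_{A|pre(T)} = ∏_{j=1}^r p_{A_j|pre(T)} for every disconnected subset A ⊆ T with connected components A_1,…,A_r; (II) for every T ∈ 𝒯, p_{T|pre(T)} = p_{T|pa_D(T)}, p_{A|pa_D(T)} = p_{A|pa_G(A)} for every connected subset A ⊆ T, and p_{A|pa_D(T)} = ∏_{j=1}^r p_{A_j|pa_D(T)} for every disconnected subset A ⊆ T with connected components A_1,…,A_r. -/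

import Mathlib

open scoped Classical BigOperators

/-- A mixed graph on a node set `V`: a set of directed edges and a symmetric
irreflexive set of undirected edges, the two edge sets being disjoint. -/
structure MixedGraph (V : Type*) where
  dir : V → V → Prop
  undir : V → V → Prop
  undir_symm : ∀ {a b}, undir a b → undir b a
  undir_irrefl : ∀ a, ¬ undir a a
  edge_disjoint : ∀ a b, dir a b → ¬ undir a b

namespace MixedGraph

variable {V : Type*} [Fintype V] [DecidableEq V] (G : MixedGraph V)

/-- One step of a semi-directed path: an undirected edge or a directed edge
followed in the direction of traversal. -/
def step (a b : V) : Prop := G.dir a b ∨ G.undir a b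

/-- No semi-directed cycle: there is no directed edge `a → b` together with a
semi-directed path from `b` back to `a`. -/
def NoSemiDirectedCycle : Prop :=
  ∀ a b : V, G.dir a b → ¬ Relation.ReflTransGen G.step b a

/-- Two nodes are in the same chain component iff they are joined by a path of
undirected edges (the equivalence relation generated by the undirected part). -/
def sameComp (a b : V) : Prop := Relation.ReflTransGen G.undir a b

/-- The chain component of a node. -/
noncomputable def component (v : V) : Finset V :=
  Finset.univ.filter fun w => G.sameComp v w

/-- `T` is a chain component of `G`. -/
def IsComponent (T : Finset V) : Prop := ∃ v, T = G.component v

/-- The collection of chain components of `G`. -/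
noncomputable def componentsF : Finset (Finset V) :=
  Finset.univ.image fun v => G.component v

/-- The parents `pa_G(A)`: nodes outside `A` with a directed edge into `A`. -/
noncomputable def paG (A : Finset V) : Finset V :=
  Finset.univ.filter fun w => w ∉ A ∧ ∃ v ∈ A, G.dir w v

/-- The (inclusive) neighbours `Nb_G(A)`: `A` together with all nodes joined to
`A` by an undirected edge. -/
noncomputable def nbG (A : Finset V) : Finset V :=
  A ∪ Finset.univ.filter fun w => ∃ v ∈ A, G.undir v w

/-- The edge relation of the directed graph `D` of chain components:
`T₁ → T₂` iff they are distinct chain components and `G` has a directed edge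
from a node of `T₁` to a node of `T₂`. -/
def dirD (T₁ T₂ : Finset V) : Prop :=
  G.IsComponent T₁ ∧ G.IsComponent T₂ ∧ T₁ ≠ T₂ ∧ ∃ v ∈ T₁, ∃ w ∈ T₂, G.dir v w

/-- `pa_D(T)`: the union of the parent components of `T` in `D`. -/
noncomputable def paD (T : Finset V) : Finset V :=
  Finset.univ.filter fun w => G.dirD (G.component w) T

/-- `nd_D(T)`: the union of the components `T'` such that there is no directed
path from `T` to `T'` in `D`. -/
noncomputable def ndD (T : Finset V) : Finset V :=
  Finset.univ.filter fun w => ¬ Relation.ReflTransGen G.dirD T (G.component w)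

/-- A set of nodes `A` is connected if the subgraph of the undirected part of
`G` induced by `A` is connected (in particular nonempty). -/
def ConnectedIn (A : Finset V) : Prop :=
  A.Nonempty ∧ ∀ a ∈ A, ∀ b ∈ A,
    Relation.ReflTransGen (fun x y => x ∈ A ∧ y ∈ A ∧ G.undir x y) a b

/-- The connected component of `v` inside the induced subgraph on `A`. -/
noncomputable def compIn (A : Finset V) (v : V) : Finset V :=
  A.filter fun w =>
    Relation.ReflTransGen (fun x y => x ∈ A ∧ y ∈ A ∧ G.undir x y) v w

/-- The set of connected components of the induced subgraph on `A`. -/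
noncomputable def connComps (A : Finset V) : Finset (Finset V) :=
  A.image fun v => G.compIn A v

/-- `ord` is a strict total order of the chain components consistent with `G`:
`ord T T'` implies that `T` is not a parent component of `T'`. -/
def ConsistentOrder (ord : Finset V → Finset V → Prop) : Prop :=
  (∀ T₁ T₂, G.IsComponent T₁ → G.IsComponent T₂ → T₁ ≠ T₂ →
      ord T₁ T₂ ∨ ord T₂ T₁) ∧
  (∀ T, G.IsComponent T → ¬ ord T T) ∧
  (∀ T₁ T₂ T₃, G.IsComponent T₁ → G.IsComponent T₂ → G.IsComponent T₃ →
      ord T₁ T₂ → ord T₂ T₃ → ord T₁ T₃) ∧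
  (∀ T₁ T₂, G.IsComponent T₁ → G.IsComponent T₂ → ord T₁ T₂ → ¬ G.dirD T₁ T₂)

/-- `pre(T)`: the union of all the chain components `T'` with `T ≺ T'`
(the predecessors, i.e. the past, of `T`). -/
noncomputable def pre (ord : Finset V → Finset V → Prop) (T : Finset V) :
    Finset V :=
  Finset.univ.filter fun w => ord T (G.component w)

end MixedGraph

/-- A cell of the joint contingency table: variable `v` takes one of the
levels `0, …, r v - 1` (level `0` playing the role of the first level `1`). -/
abbrev Cell {V : Type*} (r : V → ℕ) := ∀ v : V, Fin (r v)

variable {V : Type*} [Fintype V] [DecidableEq V] {r : V → ℕ}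

/-- The marginal probability `p_S(i_S)` (as a function of a full cell `i`,
depending on it only through the coordinates in `S`). -/
noncomputable def marginal (p : Cell r → ℝ) (S : Finset V) (i : Cell r) : ℝ :=
  ∑ j : Cell r, if ∀ v ∈ S, j v = i v then p j else 0

/-- The conditional probability `p_{A|B}(i_A | i_B)`. -/
noncomputable def condProb (p : Cell r → ℝ) (A B : Finset V) (i : Cell r) : ℝ :=
  marginal p (A ∪ B) i / marginal p B i

/-- `p` is a strictly positive joint probability mass function. -/
def IsPosPMF (p : Cell r → ℝ) : Prop :=
  (∀ i, 0 < p i) ∧ ∑ i : Cell r, p i = 1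

/-- Conditional independence `A ⊥ B | C`. -/
def CondIndep (p : Cell r → ℝ) (A B C : Finset V) : Prop :=
  ∀ i : Cell r,
    marginal p (A ∪ B ∪ C) i * marginal p C i =
      marginal p (A ∪ C) i * marginal p (B ∪ C) i

/-- The cell agreeing with `i` on `S` and equal to the first (reference)
level outside `S`. -/
def splice (hr : ∀ v, 2 ≤ r v) (S : Finset V) (i : Cell r) : Cell r :=
  fun v => if v ∈ S then i v else ⟨0, by have := hr v; omega⟩

/-- The conditional multivariate logistic contrast
`η^{(A)}(i_A | i_B) = Σ_{s ⊆ A} (−1)^{|A∖s|} log p_{A|B}((i_s, 1_{A∖s}) | i_B)`. -/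
noncomputable def mlContrast (hr : ∀ v, 2 ≤ r v) (p : Cell r → ℝ)
    (A B : Finset V) (i : Cell r) : ℝ :=
  ∑ s ∈ A.powerset,
    (-1 : ℝ) ^ (A \ s).card * Real.log (condProb p A B (splice hr (s ∪ B) i))

/-- The multivariate regression (MR) Markov property for the chain graph `G`
with respect to the consistent ordering `ord`: for every chain component `T`
and every nonempty `A ⊆ T`, (MR1) if `A` is connected then
`A ⊥ (pre(T)∖pa_G(A)) | pa_G(A)`, and (MR2) if `A` is disconnected then its
connected components are mutually independent given `pre(T)`. -/
def MRMarkov (G : MixedGraph V) (ord : Finset V → Finset V → Prop)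
    (p : Cell r → ℝ) : Prop :=
  ∀ T : Finset V, G.IsComponent T → ∀ A ⊆ T, A.Nonempty →
    (G.ConnectedIn A →
      CondIndep p A (G.pre ord T \ G.paG A) (G.paG A)) ∧
    (¬ G.ConnectedIn A →
      ∀ i : Cell r,
        condProb p A (G.pre ord T) i =
          ∏ Aj ∈ G.connComps A, condProb p Aj (G.pre ord T) i)

/-- The block-recursive Markov property of type IV for the chain graph `G`:
(IV0) `T ⊥ (nd_D(T)∖pa_D(T)) | pa_D(T)`;
(IV1) `A ⊥ (pa_D(T)∖pa_G(A)) | pa_G(A)` for all `A ⊆ T`;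
(IV2) `A ⊥ (T∖Nb_G(A)) | pa_D(T)` for all connected `A ⊆ T`. -/
def TypeIVMarkov (G : MixedGraph V) (p : Cell r → ℝ) : Prop :=
  (∀ T : Finset V, G.IsComponent T →
      CondIndep p T (G.ndD T \ G.paD T) (G.paD T)) ∧
  (∀ T : Finset V, G.IsComponent T → ∀ A ⊆ T,
      CondIndep p A (G.paD T \ G.paG A) (G.paG A)) ∧
  (∀ T : Finset V, G.IsComponent T → ∀ A ⊆ T, G.ConnectedIn A →
      CondIndep p A (T \ G.nbG A) (G.paD T))

/-!
Two facts about conditional probability masses carry the argument. Summing out coordinates of `A`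
shows that an identity `p_{A|P} = p_{A|Q}` passes to every subset of `A`. Averaging `p_{A|P}`
against `p_P` shows that if `p_{A|P}` depends only on the coordinates in `A ∪ C`, where `C ⊆ P`,
then it equals `p_{A|C}`. A chain component `T` is itself connected, so either family of conditions
yields `p_{T|pre(T)} = p_{T|pa_D(T)}`; hence conditioning subsets of `T` on `pre(T)` or on
`pa_D(T)` is the same, which exchanges the remaining conditions.
-/

/-- The cylinder set of the cells that agree with `i` on `S`; `marginal p S i` is its mass. -/
def cylinder (S : Finset V) (i : Cell r) : Finset (Cell r) :=
  Finset.univ.filter fun j => ∀ v ∈ S, j v = i v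

section Marginal

variable {p : Cell r → ℝ} {A B C D P S : Finset V} {i j : Cell r}

theorem mem_cylinder : j ∈ cylinder S i ↔ ∀ v ∈ S, j v = i v := by
  simp [cylinder]

theorem marginal_eq_sum_cylinder (p : Cell r → ℝ) (S : Finset V) (i : Cell r) :
    marginal p S i = ∑ j ∈ cylinder S i, p j :=
  (Finset.sum_filter _ _).symm

theorem cylinder_congr (h : ∀ v ∈ S, i v = j v) : cylinder S i = cylinder S j := by
  ext k
  simp only [mem_cylinder]
  exact forall₂_congr fun v hv => by rw [h v hv]

theorem dependsOn_marginal (p : Cell r → ℝ) (S : Finset V) : DependsOn (marginal p S) S := by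
  intro i j h
  rw [marginal_eq_sum_cylinder, marginal_eq_sum_cylinder, cylinder_congr h]

theorem dependsOn_condProb (p : Cell r → ℝ) (A B : Finset V) :
    DependsOn (condProb p A B) ↑(A ∪ B) := by
  intro i j h
  rw [condProb, condProb, dependsOn_marginal p (A ∪ B) h,
    dependsOn_marginal p B fun v hv => h v (Finset.mem_union_right A hv)]

theorem marginal_pos (hp : ∀ i, 0 < p i) (S : Finset V) (i : Cell r) : 0 < marginal p S i := by
  rw [marginal_eq_sum_cylinder]
  exact Finset.sum_pos (fun j _ => hp j) ⟨i, mem_cylinder.2 fun _ _ => rfl⟩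

theorem cylinder_sdiff_filter_piecewise (hD : D ⊆ S) (hj : j ∈ cylinder Dᶜ i) :
    {k ∈ cylinder (S \ D) i | D.piecewise k i = j} = cylinder S j := by
  ext k
  simp only [Finset.mem_filter, mem_cylinder, Finset.mem_sdiff, Finset.mem_compl] at hj ⊢
  constructor
  · rintro ⟨hki, rfl⟩ v hvS
    by_cases hvD : v ∈ D
    · simp [hvD]
    · simp [hvD, hki v ⟨hvS, hvD⟩]
  · refine fun hkj => ⟨fun v hv => (hkj v hv.1).trans (hj v hv.2), funext fun v => ?_⟩
    by_cases hvD : v ∈ D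
    · simp [hvD, hkj v (hD hvD)]
    · simp [hvD, hj v hvD]

theorem sum_cylinder_compl_marginal (p : Cell r → ℝ) (hD : D ⊆ S) (i : Cell r) :
    ∑ j ∈ cylinder Dᶜ i, marginal p S j = marginal p (S \ D) i := by
  have hmaps : ∀ k ∈ cylinder (S \ D) i, D.piecewise k i ∈ cylinder Dᶜ i := fun k _ =>
    mem_cylinder.2 fun v hv => Finset.piecewise_eq_of_notMem _ _ _ (Finset.mem_compl.1 hv)
  rw [marginal_eq_sum_cylinder, ← Finset.sum_fiberwise_of_maps_to hmaps]
  refine Finset.sum_congr rfl fun j hj => ?_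
  rw [marginal_eq_sum_cylinder, cylinder_sdiff_filter_piecewise hD hj]

theorem sum_cylinder_compl_condProb (p : Cell r → ℝ) (hDA : D ⊆ A) (hDB : Disjoint D B)
    (i : Cell r) : ∑ j ∈ cylinder Dᶜ i, condProb p A B j = condProb p (A \ D) B i := by
  have hB : ∀ j ∈ cylinder Dᶜ i, marginal p B j = marginal p B i := fun j hj =>
    dependsOn_marginal p B fun v hv =>
      mem_cylinder.1 hj v (Finset.mem_compl.2 (Finset.disjoint_right.1 hDB hv))
  calc ∑ j ∈ cylinder Dᶜ i, condProb p A B j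
      = ∑ j ∈ cylinder Dᶜ i, marginal p (A ∪ B) j / marginal p B i :=
        Finset.sum_congr rfl fun j hj => by rw [condProb, hB j hj]
    _ = marginal p ((A ∪ B) \ D) i / marginal p B i := by
        rw [← Finset.sum_div, sum_cylinder_compl_marginal p (hDA.trans Finset.subset_union_left)]
    _ = condProb p (A \ D) B i := by
        rw [Finset.union_sdiff_distrib, hDB.symm.sdiff_eq_left, condProb]

theorem condProb_congr_of_subset (hBA : B ⊆ A) (hAP : Disjoint A P) (hAC : Disjoint A C)
    (h : condProb p A P = condProb p A C) : condProb p B P = condProb p B C := by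
  funext i
  rw [← Finset.sdiff_sdiff_eq_self hBA,
    ← sum_cylinder_compl_condProb p Finset.sdiff_subset (hAP.mono_left Finset.sdiff_subset),
    ← sum_cylinder_compl_condProb p Finset.sdiff_subset (hAC.mono_left Finset.sdiff_subset), h]

theorem marginal_union_eq_sum_condProb_mul (hp : ∀ i, 0 < p i) (hCP : C ⊆ P)
    (hA : Disjoint A (P \ C)) (i : Cell r) :
    marginal p (A ∪ C) i = ∑ j ∈ cylinder (P \ C)ᶜ i, condProb p A P j * marginal p P j := by
  have hsets : (A ∪ P) \ (P \ C) = A ∪ C := by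
    rw [Finset.union_sdiff_distrib, hA.sdiff_eq_left, Finset.sdiff_sdiff_eq_self hCP]
  have hsub : P \ C ⊆ A ∪ P := Finset.sdiff_subset.trans Finset.subset_union_right
  rw [← hsets, ← sum_cylinder_compl_marginal p hsub]
  exact Finset.sum_congr rfl fun j _ => (div_mul_cancel₀ _ (marginal_pos hp P j).ne').symm

theorem condProb_eq_of_dependsOn (hp : ∀ i, 0 < p i) (hCP : C ⊆ P) (hA : Disjoint A (P \ C))
    (h : DependsOn (condProb p A P) ↑(A ∪ C)) : condProb p A C = condProb p A P := by
  funext i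
  have hconst : ∀ j ∈ cylinder (P \ C)ᶜ i, condProb p A P j = condProb p A P i := by
    refine fun j hj => h fun v hv => mem_cylinder.1 hj v (Finset.mem_compl.2 fun hvD => ?_)
    rcases Finset.mem_union.1 hv with hvA | hvC
    · exact Finset.disjoint_left.1 hA hvA hvD
    · exact (Finset.mem_sdiff.1 hvD).2 hvC
  rw [condProb, div_eq_iff (marginal_pos hp C i).ne']
  calc marginal p (A ∪ C) i
      = ∑ j ∈ cylinder (P \ C)ᶜ i, condProb p A P j * marginal p P j :=
        marginal_union_eq_sum_condProb_mul hp hCP hA i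
    _ = condProb p A P i * ∑ j ∈ cylinder (P \ C)ᶜ i, marginal p P j := by
        rw [Finset.mul_sum]
        exact Finset.sum_congr rfl fun j hj => by rw [hconst j hj]
    _ = condProb p A P i * marginal p C i := by
        rw [sum_cylinder_compl_marginal p Finset.sdiff_subset, Finset.sdiff_sdiff_eq_self hCP]

theorem condProb_eq_of_subset_of_subset (hp : ∀ i, 0 < p i) (hBC : B ⊆ C) (hCP : C ⊆ P)
    (hA : Disjoint A (P \ C)) (h : condProb p A P = condProb p A B) :
    condProb p A C = condProb p A P := by
  refine condProb_eq_of_dependsOn hp hCP hA ?_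
  rw [h]
  exact (dependsOn_condProb p A B).mono (Finset.coe_subset.2 (Finset.union_subset_union_right hBC))

end Marginal

namespace MixedGraph

variable {V : Type*} {G : MixedGraph V} {ord : Finset V → Finset V → Prop}
  {T A B : Finset V} {v w : V}

theorem sameComp_symm (h : G.sameComp v w) : G.sameComp w v :=
  have : Std.Symm G.undir := ⟨fun _ _ => G.undir_symm⟩
  symm_of (Relation.ReflTransGen G.undir) h

theorem subset_of_mem_connComps [DecidableEq V] (h : B ∈ G.connComps A) : B ⊆ A := by
  obtain ⟨v, -, rfl⟩ := Finset.mem_image.1 h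
  exact Finset.filter_subset _ _

variable [Fintype V]

theorem mem_component : w ∈ G.component v ↔ G.sameComp v w := by
  simp [component]

theorem mem_component_self (v : V) : v ∈ G.component v :=
  mem_component.2 .refl

theorem IsComponent.component_eq (hT : G.IsComponent T) (hv : v ∈ T) : G.component v = T := by
  obtain ⟨u, rfl⟩ := hT
  have huv : G.sameComp u v := mem_component.1 hv
  ext w
  simp only [mem_component]
  exact ⟨huv.trans, (sameComp_symm huv).trans⟩

theorem IsComponent.connectedIn (hT : G.IsComponent T) : G.ConnectedIn T := by
  refine ⟨hT.elim fun v hv => ⟨v, hv ▸ mem_component_self v⟩, fun a ha b hb => ?_⟩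
  obtain rfl := hT.component_eq ha
  induction mem_component.1 hb with
  | refl => exact .refl
  | tail hac hcb ih =>
    have hc := mem_component.2 hac
    exact .tail (ih hc) ⟨hc, mem_component.2 (hac.tail hcb), hcb⟩

theorem IsComponent.paG_subset_paD [DecidableEq V] (hT : G.IsComponent T) :
    G.paG T ⊆ G.paD T := by
  intro w hw
  obtain ⟨-, hwT, v, hv, hwv⟩ := Finset.mem_filter.1 hw
  have hne : G.component w ≠ T := fun h => hwT (h ▸ mem_component_self w)
  exact Finset.mem_filter.2
    ⟨Finset.mem_univ w, ⟨w, rfl⟩, hT, hne, w, mem_component_self w, v, hv, hwv⟩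

theorem ConsistentOrder.paD_subset_pre (hord : G.ConsistentOrder ord) (hT : G.IsComponent T) :
    G.paD T ⊆ G.pre ord T := by
  obtain ⟨htotal, -, -, hconsistent⟩ := hord
  intro w hw
  have hwT : G.dirD (G.component w) T := (Finset.mem_filter.1 hw).2
  have hw' : G.IsComponent (G.component w) := ⟨w, rfl⟩
  have hnot : ¬ ord (G.component w) T := fun h => hconsistent _ _ hw' hT h hwT
  exact Finset.mem_filter.2
    ⟨Finset.mem_univ w, (htotal _ _ hw' hT hwT.2.2.1).resolve_left hnot⟩

theorem ConsistentOrder.disjoint_pre (hord : G.ConsistentOrder ord) (hT : G.IsComponent T) :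
    Disjoint T (G.pre ord T) := by
  refine Finset.disjoint_left.2 fun v hv hv' => hord.2.1 T hT ?_
  have hpre : ord T (G.component v) := (Finset.mem_filter.1 hv').2
  rwa [hT.component_eq hv] at hpre

end MixedGraph

theorem mr_densities_iff_typeIV_densities_general {G : MixedGraph V} {p : Cell r → ℝ}
    (hp : ∀ i, 0 < p i) {T P Q : Finset V} (hT : G.ConnectedIn T) (hTP : Disjoint T P)
    (hpaG : G.paG T ⊆ Q) (hQP : Q ⊆ P) :
    ((∀ A ⊆ T, G.ConnectedIn A → ∀ i, condProb p A P i = condProb p A (G.paG A) i) ∧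
      (∀ A ⊆ T, A.Nonempty → ¬ G.ConnectedIn A → ∀ i,
        condProb p A P i = ∏ Aj ∈ G.connComps A, condProb p Aj P i))
    ↔
    ((∀ i, condProb p T P i = condProb p T Q i) ∧
      (∀ A ⊆ T, G.ConnectedIn A → ∀ i, condProb p A Q i = condProb p A (G.paG A) i) ∧
      (∀ A ⊆ T, A.Nonempty → ¬ G.ConnectedIn A → ∀ i,
        condProb p A Q i = ∏ Aj ∈ G.connComps A, condProb p Aj Q i)) := by
  have hsubsets (h : condProb p T P = condProb p T Q) :
      ∀ A ⊆ T, condProb p A P = condProb p A Q := fun A hA =>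
    condProb_congr_of_subset hA hTP (hTP.mono_right hQP) h
  have hprod (h : ∀ A ⊆ T, condProb p A P = condProb p A Q) (A : Finset V) (hA : A ⊆ T)
      (i : Cell r) :
      ∏ Aj ∈ G.connComps A, condProb p Aj P i = ∏ Aj ∈ G.connComps A, condProb p Aj Q i :=
    Finset.prod_congr rfl fun Aj hAj =>
      congrFun (h Aj ((MixedGraph.subset_of_mem_connComps hAj).trans hA)) i
  constructor
  · rintro ⟨hconn, hdisc⟩
    have hTQ : condProb p T Q = condProb p T P := condProb_eq_of_subset_of_subset hp hpaG hQP
      (hTP.mono_right Finset.sdiff_subset) (funext (hconn T subset_rfl hT))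
    have hPQ := hsubsets hTQ.symm
    refine ⟨congrFun hTQ.symm, fun A hA hAc i => ?_, fun A hA hne hAd i => ?_⟩
    · rw [← hPQ A hA, hconn A hA hAc]
    · rw [← hprod hPQ A hA, ← hPQ A hA, hdisc A hA hne hAd]
  · rintro ⟨hTQ, hconn, hdisc⟩
    have hPQ := hsubsets (funext hTQ)
    refine ⟨fun A hA hAc i => ?_, fun A hA hne hAd i => ?_⟩
    · rw [hPQ A hA, hconn A hA hAc]
    · rw [hprod hPQ A hA, hPQ A hA, hdisc A hA hne hAd]

/-- equivalence of the two families of density conditions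
(I) (the multivariate regression conditions (1a)-(1b)) and (II) (the
conditions of Lemma 1 characterizing the type IV property). -/
theorem mr_densities_iff_typeIV_densities
    {V : Type*} [Fintype V] [DecidableEq V] {r : V → ℕ} (hr : ∀ v, 2 ≤ r v)
    (G : MixedGraph V) (hG : G.NoSemiDirectedCycle)
    (ord : Finset V → Finset V → Prop) (hord : G.ConsistentOrder ord)
    (p : Cell r → ℝ) (hp : IsPosPMF p) :
    (∀ T : Finset V, G.IsComponent T →
      (∀ A ⊆ T, G.ConnectedIn A →
        ∀ i : Cell r,
          condProb p A (G.pre ord T) i = condProb p A (G.paG A) i) ∧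
      (∀ A ⊆ T, A.Nonempty → ¬ G.ConnectedIn A →
        ∀ i : Cell r,
          condProb p A (G.pre ord T) i =
            ∏ Aj ∈ G.connComps A, condProb p Aj (G.pre ord T) i))
    ↔
    (∀ T : Finset V, G.IsComponent T →
      (∀ i : Cell r,
        condProb p T (G.pre ord T) i = condProb p T (G.paD T) i) ∧
      (∀ A ⊆ T, G.ConnectedIn A →
        ∀ i : Cell r,
          condProb p A (G.paD T) i = condProb p A (G.paG A) i) ∧
      (∀ A ⊆ T, A.Nonempty → ¬ G.ConnectedIn A →
        ∀ i : Cell r,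
          condProb p A (G.paD T) i =
            ∏ Aj ∈ G.connComps A, condProb p Aj (G.paD T) i)) :=
  forall₂_congr fun _ hT =>
    mr_densities_iff_typeIV_densities_general hp.1 hT.connectedIn (hord.disjoint_pre hT)
      hT.paG_subset_paD (hord.paD_subset_pre hT)
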